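/- arXiv:2212.13600 — 2 statements merged into one kernel-verified Lean document; each statement's English description precedes it below -/
import Mathlib

section
/- Let (A,·,[·,·,·]) be a ternary F-manifold algebra, let (V;ρ,μ) be a representation of A, and let T : V → A be a relative Rota–Baxter operator on A with respect to (V;ρ,μ). Define u⋄v = μ(Tu)v and {u,v,w} = ρ(Tu,Tv)w on V. Then (V,⋄,{·,·,·}) is a ternary pre-F-manifold algebra, and T is a homomorphism from the sub-adjacent ternary F-manifold algebra V^c = (V, ·_T, [·,·,·]_T) to (A,·,[·,·,·]); that is, T(u ·_T v) = Tu·Tv and T([u,v,w]_T) = [Tu,Tv,Tw], where u ·_T v = u⋄v + v⋄u and [u,v,w]_T = {u,v,w} + {v,w,u} + {w,u,v}. -/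
open TensorProduct

/-- The 3-Leibnizator `L(x1,x2,x3,x4) = [x1,x2,x3·x4] − x3·[x1,x2,x4] − [x1,x2,x3]·x4`. -/
def leib3 {K : Type*} [Field K] {A : Type*} [AddCommGroup A] [Module K A]
    (m : A →ₗ[K] A →ₗ[K] A) (b : A →ₗ[K] A →ₗ[K] A →ₗ[K] A) (x1 x2 x3 x4 : A) : A :=
  b x1 x2 (m x3 x4) - m x3 (b x1 x2 x4) - m (b x1 x2 x3) x4

/-- A ternary F-manifold algebra. -/
structure TernaryFM (K : Type*) [Field K] (A : Type*) [AddCommGroup A] [Module K A] where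
  mul : A →ₗ[K] A →ₗ[K] A
  br : A →ₗ[K] A →ₗ[K] A →ₗ[K] A
  mul_comm : ∀ x y, mul x y = mul y x
  mul_assoc : ∀ x y z, mul (mul x y) z = mul x (mul y z)
  br_skew₁₂ : ∀ x y z, br x y z = - br y x z
  br_skew₂₃ : ∀ x y z, br x y z = - br x z y
  fund : ∀ x1 x2 x3 x4 x5,
    br x1 x2 (br x3 x4 x5) =
      br (br x1 x2 x3) x4 x5 + br x3 (br x1 x2 x4) x5 + br x3 x4 (br x1 x2 x5)
  leib : ∀ x1 x2 x3 x4 x5,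
    leib3 mul br (mul x1 x2) x3 x4 x5 =
      mul x1 (leib3 mul br x2 x3 x4 x5) + mul x2 (leib3 mul br x1 x3 x4 x5)

/-- A commutative associative algebra structure (as a bilinear map). -/
structure CommAssocAlg (K : Type*) [Field K] (B : Type*) [AddCommGroup B] [Module K B] where
  mul : B →ₗ[K] B →ₗ[K] B
  mul_comm : ∀ x y, mul x y = mul y x
  mul_assoc : ∀ x y z, mul (mul x y) z = mul x (mul y z)

/-- A ternary Nambu–Poisson algebra. -/
structure TernaryNP (K : Type*) [Field K] (A : Type*) [AddCommGroup A] [Module K A] where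
  mul : A →ₗ[K] A →ₗ[K] A
  br : A →ₗ[K] A →ₗ[K] A →ₗ[K] A
  mul_comm : ∀ x y, mul x y = mul y x
  mul_assoc : ∀ x y z, mul (mul x y) z = mul x (mul y z)
  br_skew₁₂ : ∀ x y z, br x y z = - br y x z
  br_skew₂₃ : ∀ x y z, br x y z = - br x z y
  fund : ∀ x1 x2 x3 x4 x5,
    br x1 x2 (br x3 x4 x5) =
      br (br x1 x2 x3) x4 x5 + br x3 (br x1 x2 x4) x5 + br x3 x4 (br x1 x2 x5)
  leibniz : ∀ x1 x2 x3 x4,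
    br x1 x2 (mul x3 x4) = mul x3 (br x1 x2 x4) + mul (br x1 x2 x3) x4

/-- The binary Leibnizator `L(x,y,z) = [x,y·z] − [x,y]·z − y·[x,z]`. -/
def leib2 {K : Type*} [Field K] {A : Type*} [AddCommGroup A] [Module K A]
    (m : A →ₗ[K] A →ₗ[K] A) (b : A →ₗ[K] A →ₗ[K] A) (x y z : A) : A :=
  b x (m y z) - m (b x y) z - m y (b x z)

/-- An F-manifold algebra. -/
structure FManifoldAlg (K : Type*) [Field K] (A : Type*) [AddCommGroup A] [Module K A] where
  mul : A →ₗ[K] A →ₗ[K] A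
  br : A →ₗ[K] A →ₗ[K] A
  mul_comm : ∀ x y, mul x y = mul y x
  mul_assoc : ∀ x y z, mul (mul x y) z = mul x (mul y z)
  br_skew : ∀ x y, br x y = - br y x
  jacobi : ∀ x y z, br x (br y z) + br y (br z x) + br z (br x y) = 0
  hm : ∀ x y z w,
    leib2 mul br (mul x y) z w = mul x (leib2 mul br y z w) + mul y (leib2 mul br x z w)

section Rep

variable {K : Type*} [Field K] {A V : Type*} [AddCommGroup A] [Module K A]
  [AddCommGroup V] [Module K V]

/-- Representation of the underlying 3-Lie algebra. -/
def Is3LieRep (T : TernaryFM K A) (ρ : A →ₗ[K] A →ₗ[K] V →ₗ[K] V) : Prop :=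
  (∀ x y, ρ x y = - ρ y x) ∧
  (∀ x1 x2 x3 x4,
    ρ x1 x2 ∘ₗ ρ x3 x4 - ρ x3 x4 ∘ₗ ρ x1 x2 = ρ (T.br x1 x2 x3) x4 - ρ (T.br x1 x2 x4) x3) ∧
  (∀ x1 x2 x3 x4,
    ρ (T.br x1 x2 x3) x4 = ρ x1 x2 ∘ₗ ρ x3 x4 + ρ x2 x3 ∘ₗ ρ x1 x4 + ρ x3 x1 ∘ₗ ρ x2 x4)

/-- Representation of the underlying commutative associative algebra. -/
def IsAssocRep (T : TernaryFM K A) (μ : A →ₗ[K] V →ₗ[K] V) : Prop :=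
  ∀ x y, μ (T.mul x y) = μ x ∘ₗ μ y

/-- `L1(x,y,z,u) = ρ(x,y)μ(z)u − μ(z)ρ(x,y)u − μ([x,y,z])u`. -/
def L1 (T : TernaryFM K A) (ρ : A →ₗ[K] A →ₗ[K] V →ₗ[K] V) (μ : A →ₗ[K] V →ₗ[K] V)
    (x y z : A) (u : V) : V :=
  ρ x y (μ z u) - μ z (ρ x y u) - μ (T.br x y z) u

/-- `L2(x,y,z,u) = μ(z)ρ(x,y)u + μ(y)ρ(x,z)u − ρ(x,y·z)u`. -/
def L2 (T : TernaryFM K A) (ρ : A →ₗ[K] A →ₗ[K] V →ₗ[K] V) (μ : A →ₗ[K] V →ₗ[K] V)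
    (x y z : A) (u : V) : V :=
  μ z (ρ x y u) + μ y (ρ x z u) - ρ x (T.mul y z) u

/-- `L3(x,y,z,u) = ρ(x,y)μ(z)u + ρ(x,z)μ(y)u − ρ(x,y·z)u`. -/
def L3 (T : TernaryFM K A) (ρ : A →ₗ[K] A →ₗ[K] V →ₗ[K] V) (μ : A →ₗ[K] V →ₗ[K] V)
    (x y z : A) (u : V) : V :=
  ρ x y (μ z u) + ρ x z (μ y u) - ρ x (T.mul y z) u

/-- Representation of a ternary F-manifold algebra. -/
def IsFMRep (T : TernaryFM K A) (ρ : A →ₗ[K] A →ₗ[K] V →ₗ[K] V)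
    (μ : A →ₗ[K] V →ₗ[K] V) : Prop :=
  Is3LieRep T ρ ∧ IsAssocRep T μ ∧
  (∀ x1 x2 x3 x4 u, L1 T ρ μ (T.mul x1 x2) x3 x4 u =
      μ x1 (L1 T ρ μ x2 x3 x4 u) + μ x2 (L1 T ρ μ x1 x3 x4 u)) ∧
  (∀ x1 x2 x3 x4 u, L2 T ρ μ (T.mul x1 x2) x3 x4 u =
      μ x1 (L2 T ρ μ x2 x3 x4 u) + μ x2 (L2 T ρ μ x1 x3 x4 u)) ∧
  (∀ x1 x2 x3 x4 u, μ (leib3 T.mul T.br x1 x2 x3 x4) u =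
      L2 T ρ μ x2 x3 x4 (μ x1 u) - μ x1 (L2 T ρ μ x2 x3 x4 u))

/-- Relative Rota–Baxter operator on a ternary F-manifold algebra. -/
def IsRelRB (T : TernaryFM K A) (ρ : A →ₗ[K] A →ₗ[K] V →ₗ[K] V)
    (μ : A →ₗ[K] V →ₗ[K] V) (Tm : V →ₗ[K] A) : Prop :=
  (∀ u v, T.mul (Tm u) (Tm v) = Tm (μ (Tm u) v + μ (Tm v) u)) ∧
  (∀ u v w, T.br (Tm u) (Tm v) (Tm w) =
      Tm (ρ (Tm u) (Tm v) w + ρ (Tm v) (Tm w) u + ρ (Tm w) (Tm u) v))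

end Rep

section Pre

variable {K : Type*} [Field K] {A : Type*} [AddCommGroup A] [Module K A]

/-- Cyclic sum bracket `[x,y,z]^C = {x,y,z} + {y,z,x} + {z,x,y}`. -/
def cbr (t : A →ₗ[K] A →ₗ[K] A →ₗ[K] A) (x y z : A) : A :=
  t x y z + t y z x + t z x y

/-- Symmetrized product `x·y = x⋄y + y⋄x`. -/
def sym (d : A →ₗ[K] A →ₗ[K] A) (x y : A) : A := d x y + d y x

/-- `F1(x1,x2,x3,x4) = {x1,x2,x3⋄x4} − x3⋄{x1,x2,x4} − [x1,x2,x3]⋄x4`. -/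
def F1 (d : A →ₗ[K] A →ₗ[K] A) (t : A →ₗ[K] A →ₗ[K] A →ₗ[K] A) (x1 x2 x3 x4 : A) : A :=
  t x1 x2 (d x3 x4) - d x3 (t x1 x2 x4) - d (cbr t x1 x2 x3) x4

/-- `F2(x1,x2,x3,x4) = x3⋄{x1,x2,x4} + x2⋄{x1,x3,x4} − {x1,x2·x3,x4}`. -/
def F2 (d : A →ₗ[K] A →ₗ[K] A) (t : A →ₗ[K] A →ₗ[K] A →ₗ[K] A) (x1 x2 x3 x4 : A) : A :=
  d x3 (t x1 x2 x4) + d x2 (t x1 x3 x4) - t x1 (sym d x2 x3) x4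

/-- The 3-Leibnizator of the sub-adjacent operations. -/
def Lpre (d : A →ₗ[K] A →ₗ[K] A) (t : A →ₗ[K] A →ₗ[K] A →ₗ[K] A) (x1 x2 x3 x4 : A) : A :=
  cbr t x1 x2 (sym d x3 x4) - sym d x3 (cbr t x1 x2 x4) - sym d (cbr t x1 x2 x3) x4

/-- A 3-pre-Lie algebra. -/
structure ThreePreLie (K : Type*) [Field K] (A : Type*) [AddCommGroup A] [Module K A] where
  tri : A →ₗ[K] A →ₗ[K] A →ₗ[K] A
  tri_skew : ∀ x y z, tri x y z = - tri y x z
  preLie₁ : ∀ x1 x2 x3 x4 x5,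
    tri x1 x2 (tri x3 x4 x5) =
      tri (cbr tri x1 x2 x3) x4 x5 + tri x3 (cbr tri x1 x2 x4) x5 + tri x3 x4 (tri x1 x2 x5)
  preLie₂ : ∀ x1 x2 x3 x4 x5,
    tri (cbr tri x1 x2 x3) x4 x5 =
      tri x1 x2 (tri x3 x4 x5) + tri x2 x3 (tri x1 x4 x5) + tri x3 x1 (tri x2 x4 x5)

/-- A ternary pre-F-manifold algebra. -/
structure TernaryPreFM (K : Type*) [Field K] (A : Type*) [AddCommGroup A] [Module K A] where
  dia : A →ₗ[K] A →ₗ[K] A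
  tri : A →ₗ[K] A →ₗ[K] A →ₗ[K] A
  zinbiel : ∀ x y z, dia x (dia y z) = dia (dia y x) z + dia (dia x y) z
  tri_skew : ∀ x y z, tri x y z = - tri y x z
  preLie₁ : ∀ x1 x2 x3 x4 x5,
    tri x1 x2 (tri x3 x4 x5) =
      tri (cbr tri x1 x2 x3) x4 x5 + tri x3 (cbr tri x1 x2 x4) x5 + tri x3 x4 (tri x1 x2 x5)
  preLie₂ : ∀ x1 x2 x3 x4 x5,
    tri (cbr tri x1 x2 x3) x4 x5 =
      tri x1 x2 (tri x3 x4 x5) + tri x2 x3 (tri x1 x4 x5) + tri x3 x1 (tri x2 x4 x5)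
  pf1 : ∀ x1 x2 x3 x4 x5,
    F1 dia tri (sym dia x1 x2) x3 x4 x5 =
      dia x1 (F1 dia tri x2 x3 x4 x5) + dia x2 (F1 dia tri x1 x3 x4 x5)
  pf2 : ∀ x1 x2 x3 x4 x5,
    F2 dia tri (sym dia x1 x2) x3 x4 x5 =
      dia x1 (F2 dia tri x2 x3 x4 x5) + dia x2 (F2 dia tri x1 x3 x4 x5)
  pf3 : ∀ x1 x2 x3 x4 x5,
    dia (Lpre dia tri x1 x2 x3 x4) x5 =
      F2 dia tri x2 x3 x4 (dia x1 x5) - dia x1 (F2 dia tri x2 x3 x4 x5)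

/-- A ternary pre-Nambu–Poisson algebra. -/
structure TernaryPreNP (K : Type*) [Field K] (A : Type*) [AddCommGroup A] [Module K A] where
  dia : A →ₗ[K] A →ₗ[K] A
  tri : A →ₗ[K] A →ₗ[K] A →ₗ[K] A
  zinbiel : ∀ x y z, dia x (dia y z) = dia (dia y x) z + dia (dia x y) z
  tri_skew : ∀ x y z, tri x y z = - tri y x z
  preLie₁ : ∀ x1 x2 x3 x4 x5,
    tri x1 x2 (tri x3 x4 x5) =
      tri (cbr tri x1 x2 x3) x4 x5 + tri x3 (cbr tri x1 x2 x4) x5 + tri x3 x4 (tri x1 x2 x5)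
  preLie₂ : ∀ x1 x2 x3 x4 x5,
    tri (cbr tri x1 x2 x3) x4 x5 =
      tri x1 x2 (tri x3 x4 x5) + tri x2 x3 (tri x1 x4 x5) + tri x3 x1 (tri x2 x4 x5)
  np1 : ∀ x1 x2 x3 x4,
    tri x1 x2 (dia x3 x4) = dia x3 (tri x1 x2 x4) + dia (cbr tri x1 x2 x3) x4
  np2 : ∀ x1 x2 x3 x4,
    tri x1 (sym dia x2 x3) x4 = dia x3 (tri x1 x2 x4) + dia x2 (tri x1 x3 x4)

end Pre

/-- The coherence map `K(x,y,z,u) = [x,y,z·u] + [x,z,u·y] + [x,u,y·z]`. -/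
def kmap {K : Type*} [Field K] {A : Type*} [AddCommGroup A] [Module K A]
    (T : TernaryFM K A) (x y z u : A) : A :=
  T.br x y (T.mul z u) + T.br x z (T.mul u y) + T.br x u (T.mul y z)

section SD

variable {K : Type*} [Field K] {A V : Type*} [AddCommGroup A] [Module K A]
  [AddCommGroup V] [Module K V]

/-- Semidirect product multiplication on `A × V`. -/
def sdMul (T : TernaryFM K A) (μ : A →ₗ[K] V →ₗ[K] V) (p q : A × V) : A × V :=
  (T.mul p.1 q.1, μ p.1 q.2 + μ q.1 p.2)

/-- Semidirect product ternary bracket on `A × V`. -/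
def sdBr (T : TernaryFM K A) (ρ : A →ₗ[K] A →ₗ[K] V →ₗ[K] V) (p q r : A × V) : A × V :=
  (T.br p.1 q.1 r.1, ρ p.1 q.1 r.2 - ρ p.1 r.1 q.2 + ρ q.1 r.1 p.2)

/-- The Nijenhuis operator `N_T(x+u) = Tu` on `A × V`. -/
def nT (Tm : V →ₗ[K] A) (p : A × V) : A × V := (Tm p.2, 0)

end SD

/-!
The Rota–Baxter identities say exactly that `Tm` carries the sub-adjacent operations of
`u ⋄ v = μ (Tm u) v` and `{u, v, w} = ρ (Tm u) (Tm v) w` to the operations of `A`. Hence `F1`, `F2`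
and the 3-Leibnizator on `V` are the pullbacks along `Tm` of `L1`, `L2` and the 3-Leibnizator of
`A`, and each axiom of a ternary pre-F-manifold algebra is an axiom of a representation evaluated on
the image of `Tm`.
-/

section RelativeRotaBaxter

variable {K : Type*} [Field K] {A V : Type*} [AddCommGroup A] [Module K A]
  [AddCommGroup V] [Module K V]

/-- Relative Rota–Baxter operator on the underlying commutative associative algebra: the first half
of `IsRelRB`. -/
def IsAssocRelRB (T : TernaryFM K A) (μ : A →ₗ[K] V →ₗ[K] V) (Tm : V →ₗ[K] A) : Prop :=
  ∀ u v, T.mul (Tm u) (Tm v) = Tm (μ (Tm u) v + μ (Tm v) u)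

/-- Relative Rota–Baxter operator on the underlying 3-Lie algebra: the second half of `IsRelRB`. -/
def Is3LieRelRB (T : TernaryFM K A) (ρ : A →ₗ[K] A →ₗ[K] V →ₗ[K] V) (Tm : V →ₗ[K] A) : Prop :=
  ∀ u v w, T.br (Tm u) (Tm v) (Tm w) =
    Tm (ρ (Tm u) (Tm v) w + ρ (Tm v) (Tm w) u + ρ (Tm w) (Tm u) v)

/-- The product `u ⋄ v = μ (Tm u) v` induced on `V`, as a bilinear map. -/
def inducedDia (μ : A →ₗ[K] V →ₗ[K] V) (Tm : V →ₗ[K] A) : V →ₗ[K] V →ₗ[K] V :=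
  μ ∘ₗ Tm

/-- The ternary operation `{u, v, w} = ρ (Tm u) (Tm v) w` induced on `V`, as a trilinear map. -/
def inducedTri (ρ : A →ₗ[K] A →ₗ[K] V →ₗ[K] V) (Tm : V →ₗ[K] A) : V →ₗ[K] V →ₗ[K] V →ₗ[K] V :=
  ρ.compl₁₂ Tm Tm

theorem inducedDia_apply (μ : A →ₗ[K] V →ₗ[K] V) (Tm : V →ₗ[K] A) (u v : V) :
    inducedDia μ Tm u v = μ (Tm u) v :=
  rfl

theorem inducedTri_apply (ρ : A →ₗ[K] A →ₗ[K] V →ₗ[K] V) (Tm : V →ₗ[K] A) (u v w : V) :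
    inducedTri ρ Tm u v w = ρ (Tm u) (Tm v) w :=
  rfl

variable {T : TernaryFM K A} {ρ : A →ₗ[K] A →ₗ[K] V →ₗ[K] V} {μ : A →ₗ[K] V →ₗ[K] V}
  {Tm : V →ₗ[K] A}

theorem map_sym_inducedDia (hmul : IsAssocRelRB T μ Tm) (u v : V) :
    Tm (sym (inducedDia μ Tm) u v) = T.mul (Tm u) (Tm v) :=
  (hmul u v).symm

theorem map_cbr_inducedTri (hbr : Is3LieRelRB T ρ Tm) (u v w : V) :
    Tm (cbr (inducedTri ρ Tm) u v w) = T.br (Tm u) (Tm v) (Tm w) :=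
  (hbr u v w).symm

theorem F1_induced_eq_L1 (hbr : Is3LieRelRB T ρ Tm) (x y z u : V) :
    F1 (inducedDia μ Tm) (inducedTri ρ Tm) x y z u = L1 T ρ μ (Tm x) (Tm y) (Tm z) u := by
  simp only [F1, L1, inducedDia_apply, inducedTri_apply, map_cbr_inducedTri hbr]

theorem F2_induced_eq_L2 (hmul : IsAssocRelRB T μ Tm) (x y z u : V) :
    F2 (inducedDia μ Tm) (inducedTri ρ Tm) x y z u = L2 T ρ μ (Tm x) (Tm y) (Tm z) u := by
  simp only [F2, L2, inducedDia_apply, inducedTri_apply, map_sym_inducedDia hmul]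

theorem map_Lpre_induced (hmul : IsAssocRelRB T μ Tm) (hbr : Is3LieRelRB T ρ Tm) (x y z u : V) :
    Tm (Lpre (inducedDia μ Tm) (inducedTri ρ Tm) x y z u) =
      leib3 T.mul T.br (Tm x) (Tm y) (Tm z) (Tm u) := by
  simp only [Lpre, leib3, map_sub, map_sym_inducedDia hmul, map_cbr_inducedTri hbr]

theorem inducedDia_zinbiel (hμ : IsAssocRep T μ) (hmul : IsAssocRelRB T μ Tm) (x y z : V) :
    inducedDia μ Tm x (inducedDia μ Tm y z) =
      inducedDia μ Tm (inducedDia μ Tm y x) z + inducedDia μ Tm (inducedDia μ Tm x y) z :=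
  calc
    μ (Tm x) (μ (Tm y) z) = μ (T.mul (Tm x) (Tm y)) z := by rw [hμ, LinearMap.comp_apply]
    _ = inducedDia μ Tm (sym (inducedDia μ Tm) x y) z := by
      rw [inducedDia_apply, map_sym_inducedDia hmul]
    _ = _ := by rw [sym, add_comm, map_add, LinearMap.add_apply]

theorem Is3LieRep.skew_apply (hρ : Is3LieRep T ρ) (x y : A) (u : V) : ρ x y u = -ρ y x u := by
  rw [hρ.1 x y, LinearMap.neg_apply]

theorem Is3LieRep.fund_apply (hρ : Is3LieRep T ρ) (x1 x2 x3 x4 : A) (u : V) :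
    ρ x1 x2 (ρ x3 x4 u) =
      ρ (T.br x1 x2 x3) x4 u + ρ x3 (T.br x1 x2 x4) u + ρ x3 x4 (ρ x1 x2 u) := by
  have commutator := LinearMap.congr_fun (hρ.2.1 x1 x2 x3 x4) u
  simp only [LinearMap.sub_apply, LinearMap.comp_apply] at commutator
  rw [hρ.skew_apply x3 (T.br x1 x2 x4), ← sub_eq_add_neg, ← commutator, sub_add_cancel]

theorem Is3LieRep.br_apply (hρ : Is3LieRep T ρ) (x1 x2 x3 x4 : A) (u : V) :
    ρ (T.br x1 x2 x3) x4 u =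
      ρ x1 x2 (ρ x3 x4 u) + ρ x2 x3 (ρ x1 x4 u) + ρ x3 x1 (ρ x2 x4 u) :=
  LinearMap.congr_fun (hρ.2.2 x1 x2 x3 x4) u

/-- The 3-pre-Lie algebra on `V` induced by a relative Rota–Baxter operator on the underlying
3-Lie algebra. -/
def inducedThreePreLie (hρ : Is3LieRep T ρ) (hbr : Is3LieRelRB T ρ Tm) : ThreePreLie K V where
  tri := inducedTri ρ Tm
  tri_skew x y := hρ.skew_apply (Tm x) (Tm y)
  preLie₁ x1 x2 x3 x4 := by
    simpa only [inducedTri_apply, map_cbr_inducedTri hbr] using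
      hρ.fund_apply (Tm x1) (Tm x2) (Tm x3) (Tm x4)
  preLie₂ x1 x2 x3 x4 := by
    simpa only [inducedTri_apply, map_cbr_inducedTri hbr] using
      hρ.br_apply (Tm x1) (Tm x2) (Tm x3) (Tm x4)

theorem F1_induced_sym (hrep : IsFMRep T ρ μ) (hrb : IsRelRB T ρ μ Tm) (x1 x2 x3 x4 x5 : V) :
    F1 (inducedDia μ Tm) (inducedTri ρ Tm) (sym (inducedDia μ Tm) x1 x2) x3 x4 x5 =
      inducedDia μ Tm x1 (F1 (inducedDia μ Tm) (inducedTri ρ Tm) x2 x3 x4 x5) +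
        inducedDia μ Tm x2 (F1 (inducedDia μ Tm) (inducedTri ρ Tm) x1 x3 x4 x5) := by
  obtain ⟨-, -, L1_mul, -, -⟩ := hrep
  simp only [F1_induced_eq_L1 hrb.2, map_sym_inducedDia hrb.1, inducedDia_apply, L1_mul]

theorem F2_induced_sym (hrep : IsFMRep T ρ μ) (hmul : IsAssocRelRB T μ Tm)
    (x1 x2 x3 x4 x5 : V) :
    F2 (inducedDia μ Tm) (inducedTri ρ Tm) (sym (inducedDia μ Tm) x1 x2) x3 x4 x5 =
      inducedDia μ Tm x1 (F2 (inducedDia μ Tm) (inducedTri ρ Tm) x2 x3 x4 x5) +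
        inducedDia μ Tm x2 (F2 (inducedDia μ Tm) (inducedTri ρ Tm) x1 x3 x4 x5) := by
  obtain ⟨-, -, -, L2_mul, -⟩ := hrep
  simp only [F2_induced_eq_L2 hmul, map_sym_inducedDia hmul, inducedDia_apply, L2_mul]

theorem inducedDia_Lpre (hrep : IsFMRep T ρ μ) (hrb : IsRelRB T ρ μ Tm) (x1 x2 x3 x4 x5 : V) :
    inducedDia μ Tm (Lpre (inducedDia μ Tm) (inducedTri ρ Tm) x1 x2 x3 x4) x5 =
      F2 (inducedDia μ Tm) (inducedTri ρ Tm) x2 x3 x4 (inducedDia μ Tm x1 x5) -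
        inducedDia μ Tm x1 (F2 (inducedDia μ Tm) (inducedTri ρ Tm) x2 x3 x4 x5) := by
  obtain ⟨-, -, -, -, apply_leib3⟩ := hrep
  simp only [F2_induced_eq_L2 hrb.1, map_Lpre_induced hrb.1 hrb.2, inducedDia_apply, apply_leib3]

/-- The ternary pre-F-manifold algebra on `V` induced by a relative Rota–Baxter operator. -/
def inducedTernaryPreFM (hrep : IsFMRep T ρ μ) (hrb : IsRelRB T ρ μ Tm) : TernaryPreFM K V where
  __ := inducedThreePreLie hrep.1 hrb.2
  dia := inducedDia μ Tm
  zinbiel := inducedDia_zinbiel hrep.2.1 hrb.1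
  pf1 := F1_induced_sym hrep hrb
  pf2 := F2_induced_sym hrep hrb.1
  pf3 := inducedDia_Lpre hrep hrb

end RelativeRotaBaxter

theorem stmt13_general {K : Type*} [Field K]
    {A V : Type*} [AddCommGroup A] [Module K A] [AddCommGroup V] [Module K V]
    (T : TernaryFM K A) (ρ : A →ₗ[K] A →ₗ[K] V →ₗ[K] V) (μ : A →ₗ[K] V →ₗ[K] V)
    (hrep : IsFMRep T ρ μ) (Tm : V →ₗ[K] A) (hrb : IsRelRB T ρ μ Tm) :
    ∃ P : TernaryPreFM K V,
      (∀ u v, P.dia u v = μ (Tm u) v) ∧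
      (∀ u v w, P.tri u v w = ρ (Tm u) (Tm v) w) ∧
      (∀ u v, Tm (sym P.dia u v) = T.mul (Tm u) (Tm v)) ∧
      (∀ u v w, Tm (cbr P.tri u v w) = T.br (Tm u) (Tm v) (Tm w)) :=
  ⟨inducedTernaryPreFM hrep hrb, inducedDia_apply μ Tm, inducedTri_apply ρ Tm,
    map_sym_inducedDia hrb.1, map_cbr_inducedTri hrb.2⟩

/-- a relative Rota–Baxter operator on a ternary F-manifold
algebra induces a ternary pre-F-manifold algebra on `V`, and `T` is a
homomorphism from the sub-adjacent algebra `V^c` to `A`. -/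
theorem stmt13 {K : Type*} [Field K] [CharZero K]
    {A V : Type*} [AddCommGroup A] [Module K A] [AddCommGroup V] [Module K V]
    (T : TernaryFM K A) (ρ : A →ₗ[K] A →ₗ[K] V →ₗ[K] V) (μ : A →ₗ[K] V →ₗ[K] V)
    (hrep : IsFMRep T ρ μ) (Tm : V →ₗ[K] A) (hrb : IsRelRB T ρ μ Tm) :
    ∃ P : TernaryPreFM K V,
      (∀ u v, P.dia u v = μ (Tm u) v) ∧
      (∀ u v w, P.tri u v w = ρ (Tm u) (Tm v) w) ∧
      (∀ u v, Tm (sym P.dia u v) = T.mul (Tm u) (Tm v)) ∧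
      (∀ u v w, Tm (cbr P.tri u v w) = T.br (Tm u) (Tm v) (Tm w)) :=
  stmt13_general T ρ μ hrep Tm hrb
end

section
/- Let (A,·,[·,·,·]) be a finite-dimensional coherence ternary F-manifold algebra and let B be a nondegenerate skew-symmetric bilinear form on A satisfying the cyclic 2-cocycle condition B(x·y,z) + B(y·z,x) + B(z·x,y) = 0 and the symplectic condition B([x,y,z],u) − B([x,y,u],z) + B([x,z,u],y) − B([y,z,u],x) = 0 for all x,y,z,u ∈ A. Then there exists a ternary pre-F-manifold algebra structure (⋄,{·,·,·}) on A, determined by B(x⋄y,z) = B(y,x·z) and B({x,y,z},u) = −B(z,[x,y,u]), whose sub-adjacent ternary F-manifold algebra is (A,·,[·,·,·]). -/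
open TensorProduct

/-!
The form `B` transports the coadjoint representation from the dual of `A` to `A`: it is given by
`{x, y, -}`, minus the transpose of `[x, y, -]`, and by `x ⋄ -`, the transpose of `x · -`. Coherence
is what makes the coadjoint representation a representation of the ternary F-manifold algebra. The
two cocycle conditions on `B` say that the identity map is a relative Rota–Baxter operator for it,
that is, `x · y = x ⋄ y + y ⋄ x` and `[x, y, z] = {x, y, z} + {y, z, x} + {z, x, y}`; the
representation axioms then read as the axioms of a ternary pre-F-manifold algebra.
-/

section Pairing

variable {R M N : Type*} [CommRing R] [AddCommGroup M] [Module R M] [AddCommGroup N] [Module R N]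

/-- The left adjoint `φ ↦ φ*` of endomorphisms with respect to a perfect pairing `B`, that is,
`B (φ* x) y = B x (φ y)`, bundled as a linear map in `φ`. -/
noncomputable def leftAdjoint (B : M →ₗ[R] N →ₗ[R] R) [B.IsPerfPair] :
    Module.End R N →ₗ[R] Module.End R M :=
  B.toPerfPair.symm.conj.toLinearMap ∘ₗ Module.Dual.transpose

theorem apply_leftAdjoint (B : M →ₗ[R] N →ₗ[R] R) [B.IsPerfPair] (φ : Module.End R N)
    (x : M) (y : N) : B (leftAdjoint B φ x) y = B x (φ y) := by
  simp [leftAdjoint, LinearEquiv.conj_apply_apply, Module.Dual.transpose_apply]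

theorem isPerfPair_of_skew {K V : Type*} [Field K] [AddCommGroup V] [Module K V]
    [FiniteDimensional K V] {B : V →ₗ[K] V →ₗ[K] K} (hB : Function.Injective B)
    (hskew : ∀ x y, B x y = -B y x) : B.IsPerfPair := by
  have flip_eq_neg : B.flip = -B := LinearMap.ext₂ fun x y => hskew y x
  refine .of_injective hB ?_
  rw [flip_eq_neg]
  exact neg_injective.comp hB

end Pairing

namespace TernaryFM

variable {K A : Type*} [Field K] [AddCommGroup A] [Module K A] (T : TernaryFM K A)

theorem br_rotate (x y z : A) : T.br x y z = T.br y z x := by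
  rw [T.br_skew₁₂ x y z, T.br_skew₂₃ y x z, neg_neg]

theorem br_br_sub_br_br (a b c d e : A) :
    T.br a b (T.br c d e) - T.br c d (T.br a b e) =
      T.br (T.br a b c) d e - T.br (T.br a b d) c e := by
  rw [T.fund a b c d e, T.br_skew₁₂ c (T.br a b d) e]
  abel

-- Both sides of `[ad(a,b), ad(c,d)] = -[ad(c,d), ad(a,b)]`, expanded by the fundamental identity.
theorem br_br_alternating_sum (a b c d e : A) :
    T.br (T.br a b c) d e - T.br (T.br a b d) c e + T.br (T.br a c d) b e
      - T.br (T.br b c d) a e = 0 := by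
  have comm_ab_cd := T.br_br_sub_br_br a b c d e
  have comm_cd_ab := T.br_br_sub_br_br c d a b e
  rw [← T.br_rotate a c d, ← T.br_rotate b c d] at comm_cd_ab
  linear_combination (norm := module) -comm_ab_cd - comm_cd_ab

theorem br_br_left (a b c d e : A) :
    T.br (T.br a b c) d e =
      T.br a b (T.br c d e) + T.br b c (T.br a d e) + T.br c a (T.br b d e) := by
  rw [T.br_rotate (T.br a b c), T.fund d e a b c, ← T.br_rotate a d e, ← T.br_rotate b d e,
    ← T.br_rotate c d e, T.br_rotate (T.br a d e), ← T.br_rotate c a (T.br b d e)]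
  abel

-- `br_br_left` for the operators `-ad(x,y)*`, where the transpose reverses compositions.
theorem br_br_left_eq_neg (a b c d e : A) :
    T.br (T.br a b c) d e =
      -(T.br c d (T.br a b e) + T.br a d (T.br b c e) + T.br b d (T.br c a e)) := by
  have comm_ab_cd := T.br_br_sub_br_br a b c d e
  have comm_bc_ad := T.br_br_sub_br_br b c a d e
  have comm_ca_bd := T.br_br_sub_br_br c a b d e
  rw [← T.br_rotate a b c] at comm_bc_ad
  rw [T.br_rotate c a b, T.br_skew₁₂ c a d, map_neg, LinearMap.neg_apply,
    LinearMap.neg_apply] at comm_ca_bd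
  linear_combination (norm := module)
    -T.br_br_left a b c d e - comm_ab_cd - comm_bc_ad - comm_ca_bd
      - T.br_br_alternating_sum a b c d e

theorem leib3_swap (x y z t : A) :
    leib3 T.mul T.br x y z t = -leib3 T.mul T.br y x z t := by
  simp only [leib3, T.br_skew₁₂ x y, map_neg, LinearMap.neg_apply]
  abel

theorem kmap_eq_sum_leib3 (x y z u : A) :
    kmap T x y z u = leib3 T.mul T.br x y z u + leib3 T.mul T.br x z u y
      + leib3 T.mul T.br x u y z := by
  simp only [leib3, kmap]
  rw [T.mul_comm (T.br x y z) u, T.mul_comm (T.br x z u) y, T.mul_comm (T.br x u y) z,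
    T.br_skew₂₃ x z y, T.br_skew₂₃ x u z, T.br_skew₂₃ x y u]
  simp only [map_neg]
  abel

theorem kmap_mul_left (x y z t u : A) :
    kmap T (T.mul x y) z t u = T.mul x (kmap T y z t u) + T.mul y (kmap T x z t u) := by
  simp only [kmap_eq_sum_leib3, T.leib, map_add]
  abel

-- Adding the hypothesis to its copy with `x` and `y` exchanged cancels the skew-symmetric `L`.
theorem kmap_mul_left_eq_add_kmap_mul_right
    (hLK : ∀ x y z t u, T.mul (leib3 T.mul T.br x y z t) u =
      kmap T y z t (T.mul x u) - T.mul x (kmap T y z t u)) (x y z t u : A) :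
    kmap T (T.mul x y) z t u = kmap T y z t (T.mul x u) + kmap T x z t (T.mul y u) := by
  have hxy := hLK x y z t u
  have hyx := hLK y x z t u
  rw [T.leib3_swap y x, map_neg, LinearMap.neg_apply] at hyx
  linear_combination (norm := module) T.kmap_mul_left x y z t u + hxy + hyx

end TernaryFM

/-- `(ρ, μ)` is the coadjoint representation of `T` in a coordinate-free guise: `V` is paired with
`A` by `B`, and `μ x`, `-ρ x y` are adjoint to `x · -`, `[x, y, -]`. The case `V = A*` with the
evaluation pairing is the usual coadjoint representation. -/
structure IsCoadjoint {K A V : Type*} [Field K] [AddCommGroup A] [Module K A] [AddCommGroup V]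
    [Module K V] (T : TernaryFM K A) (B : V →ₗ[K] A →ₗ[K] K) (ρ : A →ₗ[K] A →ₗ[K] V →ₗ[K] V)
    (μ : A →ₗ[K] V →ₗ[K] V) : Prop where
  apply_mul : ∀ x v z, B (μ x v) z = B v (T.mul x z)
  apply_br : ∀ x y v z, B (ρ x y v) z = -B v (T.br x y z)

theorem exists_isCoadjoint {K A V : Type*} [Field K] [AddCommGroup A] [Module K A]
    [AddCommGroup V] [Module K V] (T : TernaryFM K A) (B : V →ₗ[K] A →ₗ[K] K) [B.IsPerfPair] :
    ∃ ρ μ, IsCoadjoint T B ρ μ :=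
  ⟨-T.br.compr₂ (leftAdjoint B), leftAdjoint B ∘ₗ T.mul,
    fun x => apply_leftAdjoint B (T.mul x),
    fun x y v z => by simp [apply_leftAdjoint]⟩

namespace IsCoadjoint

section Representation

variable {K A V : Type*} [Field K] [AddCommGroup A] [Module K A] [AddCommGroup V] [Module K V]
  {T : TernaryFM K A} {B : V →ₗ[K] A →ₗ[K] K} {ρ : A →ₗ[K] A →ₗ[K] V →ₗ[K] V}
  {μ : A →ₗ[K] V →ₗ[K] V}

theorem isAssocRep (h : IsCoadjoint T B ρ μ) (hB : Function.Injective B) : IsAssocRep T μ := by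
  refine fun x y => LinearMap.ext fun v => hB (LinearMap.ext fun z => ?_)
  rw [LinearMap.comp_apply, h.apply_mul, h.apply_mul, h.apply_mul, T.mul_comm x y, T.mul_assoc]

theorem is3LieRep (h : IsCoadjoint T B ρ μ) (hB : Function.Injective B) : Is3LieRep T ρ := by
  refine ⟨fun x y => ?_, fun a b c d => ?_, fun a b c d => ?_⟩ <;>
    refine LinearMap.ext fun v => hB (LinearMap.ext fun z => ?_)
  · simp only [LinearMap.neg_apply, map_neg, h.apply_br, T.br_skew₁₂ x y]
  · have hfund := congrArg (B v) (T.br_br_sub_br_br a b c d z)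
    simp only [map_sub] at hfund
    simp only [LinearMap.sub_apply, LinearMap.comp_apply, map_sub, h.apply_br]
    linear_combination -hfund
  · have hcoadj := congrArg (B v) (T.br_br_left_eq_neg a b c d z)
    simp only [map_add, map_neg] at hcoadj
    simp only [LinearMap.add_apply, LinearMap.comp_apply, map_add, h.apply_br]
    linear_combination -hcoadj

theorem apply_L1 (h : IsCoadjoint T B ρ μ) (x y z : A) (v : V) (u : A) :
    B (L1 T ρ μ x y z v) u = B v (leib3 T.mul T.br x y z u) := by
  simp only [L1, leib3, map_sub, LinearMap.sub_apply, h.apply_mul, h.apply_br]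
  ring

theorem apply_L2 (h : IsCoadjoint T B ρ μ) (x y z : A) (v : V) (u : A) :
    B (L2 T ρ μ x y z v) u = -B v (kmap T x y z u) := by
  simp only [L2, kmap, map_sub, map_add, LinearMap.sub_apply, LinearMap.add_apply, h.apply_mul,
    h.apply_br, T.br_skew₂₃ x u, T.mul_comm u y, map_neg]
  ring

theorem isFMRep (h : IsCoadjoint T B ρ μ) (hB : Function.Injective B)
    (hL : ∀ x y z t u, leib3 T.mul T.br (T.mul x y) z t u =
      leib3 T.mul T.br y z t (T.mul x u) + leib3 T.mul T.br x z t (T.mul y u))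
    (hLK : ∀ x y z t u, T.mul (leib3 T.mul T.br x y z t) u =
      kmap T y z t (T.mul x u) - T.mul x (kmap T y z t u)) : IsFMRep T ρ μ := by
  refine ⟨h.is3LieRep hB, h.isAssocRep hB, fun x y z t v => ?_, fun x y z t v => ?_,
    fun x y z t v => ?_⟩ <;> refine hB (LinearMap.ext fun u => ?_)
  · simp only [map_add, LinearMap.add_apply, h.apply_mul, h.apply_L1, hL]
  · simp only [map_add, LinearMap.add_apply, h.apply_mul, h.apply_L2,
      T.kmap_mul_left_eq_add_kmap_mul_right hLK]
    ring
  · simp only [map_sub, LinearMap.sub_apply, h.apply_mul, h.apply_L2, hLK]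
    ring

end Representation

section SelfPairing

variable {K A : Type*} [Field K] [AddCommGroup A] [Module K A] {T : TernaryFM K A}
  {B : A →ₗ[K] A →ₗ[K] K} {tri : A →ₗ[K] A →ₗ[K] A →ₗ[K] A} {dia : A →ₗ[K] A →ₗ[K] A}

theorem sym_eq_mul (h : IsCoadjoint T B tri dia) (hB : Function.Injective B)
    (hskew : ∀ x y, B x y = -B y x)
    (hcyc : ∀ x y z, B (T.mul x y) z + B (T.mul y z) x + B (T.mul z x) y = 0) (x y : A) :
    sym dia x y = T.mul x y := by
  refine hB (LinearMap.ext fun u => ?_)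
  simp only [sym, map_add, LinearMap.add_apply, h.apply_mul]
  rw [hskew y, hskew x, T.mul_comm x u]
  linear_combination -hcyc x y u

theorem cbr_eq_br (h : IsCoadjoint T B tri dia) (hB : Function.Injective B)
    (hskew : ∀ x y, B x y = -B y x)
    (hsymp : ∀ x y z u,
      B (T.br x y z) u - B (T.br x y u) z + B (T.br x z u) y - B (T.br y z u) x = 0)
    (x y z : A) : cbr tri x y z = T.br x y z := by
  refine hB (LinearMap.ext fun u => ?_)
  simp only [cbr, map_add, LinearMap.add_apply, h.apply_br]
  rw [hskew z, hskew x, hskew y, T.br_skew₁₂ z x u, map_neg, LinearMap.neg_apply]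
  linear_combination -hsymp x y z u

end SelfPairing

end IsCoadjoint

/-- The ternary pre-F-manifold algebra of a representation `(tri, dia)` of `T` on `A` itself whose
symmetrizations are the operations of `T`, i.e. for which the identity of `A` is a relative
Rota–Baxter operator. -/
def TernaryPreFM.ofIsFMRep {K A : Type*} [Field K] [AddCommGroup A] [Module K A]
    {T : TernaryFM K A} {tri : A →ₗ[K] A →ₗ[K] A →ₗ[K] A} {dia : A →ₗ[K] A →ₗ[K] A}
    (hrep : IsFMRep T tri dia) (hsym : ∀ x y, sym dia x y = T.mul x y)
    (hcbr : ∀ x y z, cbr tri x y z = T.br x y z) : TernaryPreFM K A where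
  dia := dia
  tri := tri
  zinbiel x y z := by
    rw [← LinearMap.add_apply, ← map_add, add_comm (dia y x), ← sym, hsym, hrep.2.1,
      LinearMap.comp_apply]
  tri_skew x y z := LinearMap.congr_fun (hrep.1.1 x y) z
  preLie₁ a b c d z := by
    have hcomm := LinearMap.congr_fun (hrep.1.2.1 a b c d) z
    have hskew := LinearMap.congr_fun (hrep.1.1 c (T.br a b d)) z
    simp only [LinearMap.sub_apply, LinearMap.neg_apply, LinearMap.comp_apply] at hcomm hskew
    rw [hcbr, hcbr, hskew, ← sub_eq_add_neg, ← hcomm, sub_add_cancel]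
  preLie₂ a b c d z := by
    rw [hcbr]
    exact LinearMap.congr_fun (hrep.1.2.2 a b c d) z
  pf1 := by simpa only [F1, L1, hsym, hcbr] using hrep.2.2.1
  pf2 := by simpa only [F2, L2, hsym] using hrep.2.2.2.1
  pf3 := by simpa only [F2, L2, Lpre, leib3, hsym, hcbr] using hrep.2.2.2.2

theorem stmt16_general {K : Type*} [Field K]
    {A : Type*} [AddCommGroup A] [Module K A] [FiniteDimensional K A]
    (T : TernaryFM K A)
    (hc1 : ∀ x y z t u, leib3 T.mul T.br (T.mul x y) z t u =
      leib3 T.mul T.br y z t (T.mul x u) + leib3 T.mul T.br x z t (T.mul y u))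
    (hc3 : ∀ x y z t u, T.mul (leib3 T.mul T.br x y z t) u =
      kmap T y z t (T.mul x u) - T.mul x (kmap T y z t u))
    (B : A →ₗ[K] A →ₗ[K] K)
    (hBskew : ∀ x y, B x y = -B y x)
    (hBnd : ∀ x, (∀ y, B x y = 0) → x = 0)
    (hcyc : ∀ x y z, B (T.mul x y) z + B (T.mul y z) x + B (T.mul z x) y = 0)
    (hsymp : ∀ x y z u,
      B (T.br x y z) u - B (T.br x y u) z + B (T.br x z u) y - B (T.br y z u) x = 0) :
    ∃ P : TernaryPreFM K A,
      (∀ x y z, B (P.dia x y) z = B y (T.mul x z)) ∧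
      (∀ x y z u, B (P.tri x y z) u = -B z (T.br x y u)) ∧
      (∀ x y, sym P.dia x y = T.mul x y) ∧
      (∀ x y z, cbr P.tri x y z = T.br x y z) := by
  have hB : Function.Injective B :=
    LinearMap.ker_eq_bot.mp (LinearMap.separatingLeft_iff_ker_eq_bot.mp hBnd)
  have : B.IsPerfPair := isPerfPair_of_skew hB hBskew
  obtain ⟨tri, dia, h⟩ := exists_isCoadjoint T B
  have hsym := h.sym_eq_mul hB hBskew hcyc
  have hcbr := h.cbr_eq_br hB hBskew hsymp
  exact ⟨.ofIsFMRep (h.isFMRep hB hc1 hc3) hsym hcbr, h.apply_mul, h.apply_br, hsym, hcbr⟩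

/-- a coherence ternary F-manifold algebra with a nondegenerate
skew-symmetric cyclic 2-cocycle which is a symplectic structure carries a
compatible ternary pre-F-manifold algebra structure determined by `B`. -/
theorem stmt16 {K : Type*} [Field K] [CharZero K]
    {A : Type*} [AddCommGroup A] [Module K A] [FiniteDimensional K A]
    (T : TernaryFM K A)
    (hc1 : ∀ x y z t u, leib3 T.mul T.br (T.mul x y) z t u =
      leib3 T.mul T.br y z t (T.mul x u) + leib3 T.mul T.br x z t (T.mul y u))
    (hc2 : ∀ x y z t u, kmap T (T.mul x y) z t u =
      - kmap T x z t (T.mul y u) - kmap T y z t (T.mul x u))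
    (hc3 : ∀ x y z t u, T.mul (leib3 T.mul T.br x y z t) u =
      kmap T y z t (T.mul x u) - T.mul x (kmap T y z t u))
    (B : A →ₗ[K] A →ₗ[K] K)
    (hBskew : ∀ x y, B x y = - B y x)
    (hBnd : ∀ x, (∀ y, B x y = 0) → x = 0)
    (hcyc : ∀ x y z, B (T.mul x y) z + B (T.mul y z) x + B (T.mul z x) y = 0)
    (hsymp : ∀ x y z u,
      B (T.br x y z) u - B (T.br x y u) z + B (T.br x z u) y - B (T.br y z u) x = 0) :
    ∃ P : TernaryPreFM K A,
      (∀ x y z, B (P.dia x y) z = B y (T.mul x z)) ∧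
      (∀ x y z u, B (P.tri x y z) u = - B z (T.br x y u)) ∧
      (∀ x y, sym P.dia x y = T.mul x y) ∧
      (∀ x y z, cbr P.tri x y z = T.br x y z) :=
  stmt16_general T hc1 hc3 B hBskew hBnd hcyc hsymp
end
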